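/- Suppose α > −1 and (α+1)(3α+4)² − α⁴/4 < 0 (this holds exactly when α < α₋^{(c)} ≈ −0.902 or α > α₊^{(c)} ≈ 39.450). Then the 3D Lamé system is not positive definite with weight Φ: there exists u ∈ C_0^∞(ℝ³∖{0};ℝ³) with ∫_{ℝ³}(Lu)·(Φu) dx < 0. -/

import Mathlib

/-!
The energy turns negative on rapidly oscillating fields. For a frequency `k`, a constant vector `w`
and a cutoff `φ`, take the two fields `φ cos(N k·x) w` and `φ sin(N k·x) w`. In the sum of their
energy densities the terms linear in `N` cancel pointwise, and `cos² + sin² = 1` leaves the density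
of `φ w` plus `N² φ² q`, where `q(x) = (|k|² w + α (k·w) k) · Φ(x) w`. If `q` is negative at one
point, localize `φ` there; for large `N` one of the two fields then has negative energy.

By rotational symmetry and homogeneity of `Φ` only the point `e₀ = (1,0,0)` matters. With `k` at
angle `θ` to `e₀`, the quadratic form `w ↦ q(e₀)` has, on the plane of `e₀` and `k`, a
discriminant with the sign of `α⁴ sin²(2θ) - 32(α+1)²(α+2)`. The best choice is `θ = π/4`, that is
`k = (1,1,0)`, and then the form is indefinite as soon as `32(α+1)²(α+2) < α⁴`.
-/


open MeasureTheory Metric Real Filter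

noncomputable section

/-- `ℝ³` as Euclidean space. -/
abbrev E3 : Type := EuclideanSpace ℝ (Fin 3)

/-- Partial derivative `∂ᵢ f` on `ℝ³`. -/
def pd (i : Fin 3) (f : E3 → ℝ) (x : E3) : ℝ :=
  fderiv ℝ f x (EuclideanSpace.single i 1)

/-- Laplacian on `ℝ³`. -/
def lap (f : E3 → ℝ) (x : E3) : ℝ := ∑ i, pd i (pd i f) x

/-- Divergence of a vector field on `ℝ³`. -/
def divg (u : E3 → Fin 3 → ℝ) (x : E3) : ℝ := ∑ k, pd k (fun y => u y k) x

/-- The 3D Lamé operator `(Lu)ᵢ = -Δuᵢ - α ∂ᵢ (div u)`. -/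
def lame (α : ℝ) (u : E3 → Fin 3 → ℝ) (x : E3) (i : Fin 3) : ℝ :=
  - lap (fun y => u y i) x - α * pd i (divg u) x

/-- The constant `c_α = (α+2)/(8π(α+1))`. -/
def cA (α : ℝ) : ℝ := (α + 2) / (8 * Real.pi * (α + 1))

/-- The fundamental matrix `Φ` of the 3D Lamé system:
`Φ_ij(x) = c_α |x|⁻¹ (δ_ij + (α/(α+2)) xᵢxⱼ/|x|²)`. -/
def Phi (α : ℝ) (x : E3) (i j : Fin 3) : ℝ :=
  cA α * ‖x‖⁻¹ * ((if i = j then (1 : ℝ) else 0) + (α / (α + 2)) * (x i * x j) / ‖x‖ ^ 2)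

/-- `u ∈ C₀^∞(U; ℝ³)`: smooth, compactly supported, with support inside `U`. -/
def IsTestOn (U : Set E3) (u : E3 → Fin 3 → ℝ) : Prop :=
  ContDiff ℝ (⊤ : ℕ∞) u ∧ HasCompactSupport u ∧ tsupport u ⊆ U

/-- `∫_{ℝ³} (Lu)·(Φ(·-y) u) dx`. -/
def lameEnergy (α : ℝ) (u : E3 → Fin 3 → ℝ) (y : E3) : ℝ :=
  ∫ x : E3, ∑ i, ∑ j, lame α u x i * Phi α (x - y) i j * u x j


open scoped ContDiff InnerProductSpace Matrix Topology

section PartialDerivatives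

variable {f g : E3 → ℝ}

lemma pd_add (hf : Differentiable ℝ f) (hg : Differentiable ℝ g) (i : Fin 3) :
    pd i (fun y => f y + g y) = fun x => pd i f x + pd i g x := by
  funext x
  simp only [pd, fderiv_fun_add (hf x) (hg x), add_apply]

lemma pd_sum {ι : Type*} {s : Finset ι} {F : ι → E3 → ℝ} (hF : ∀ k ∈ s, Differentiable ℝ (F k))
    (i : Fin 3) : pd i (fun y => ∑ k ∈ s, F k y) = fun x => ∑ k ∈ s, pd i (F k) x := by
  funext x
  simp only [pd, fderiv_fun_sum fun k hk => hF k hk x, sum_apply]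

lemma pd_mul (hf : Differentiable ℝ f) (hg : Differentiable ℝ g) (i : Fin 3) :
    pd i (fun y => f y * g y) = fun x => pd i f x * g x + f x * pd i g x := by
  funext x
  simp only [pd, fderiv_fun_mul (hf x) (hg x), add_apply, smul_apply, smul_eq_mul]
  ring

lemma pd_mul_const (hf : Differentiable ℝ f) (c : ℝ) (i : Fin 3) :
    pd i (fun y => f y * c) = fun x => pd i f x * c := by
  funext x
  simp only [pd, fderiv_mul_const (hf x), smul_apply, smul_eq_mul, mul_comm c]

lemma pd_comp_inner {h h' : ℝ → ℝ} (hh : ∀ t, HasDerivAt h (h' t) t) (k : E3) (i : Fin 3) :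
    pd i (fun x => h ⟪k, x⟫_ℝ) = fun x => h' ⟪k, x⟫_ℝ * k i := by
  funext x
  have hd : HasFDerivAt (fun x => h ⟪k, x⟫_ℝ) (h' ⟪k, x⟫_ℝ • innerSL ℝ k) x :=
    (hh _).comp_hasFDerivAt x (innerSL ℝ k).hasFDerivAt
  simp [pd, hd.fderiv, EuclideanSpace.inner_single_right]

lemma contDiff_pd {m n : WithTop ℕ∞} (hf : ContDiff ℝ n f) (hmn : m + 1 ≤ n) (i : Fin 3) :
    ContDiff ℝ m (pd i f) :=
  (hf.fderiv_right hmn).clm_apply contDiff_const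

end PartialDerivatives

section Hessian

/-- The Hessian matrix `(∂ᵢ∂ⱼ f)(x)`. -/
def hessian (f : E3 → ℝ) (x : E3) : Matrix (Fin 3) (Fin 3) ℝ :=
  Matrix.of fun i j => pd i (pd j f) x

variable {f g : E3 → ℝ}

lemma continuous_hessian (hf : ContDiff ℝ 2 f) : Continuous (hessian f) :=
  continuous_matrix fun i j =>
    (contDiff_pd (m := 0) (contDiff_pd (m := 1) hf (by norm_num) j) (by norm_num) i).continuous

lemma hessian_mul_apply (hf : ContDiff ℝ 2 f) (hg : ContDiff ℝ 2 g) (x : E3) (i j : Fin 3) :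
    hessian (fun y => f y * g y) x i j =
      hessian f x i j * g x + pd j f x * pd i g x + pd i f x * pd j g x +
        f x * hessian g x i j := by
  have hf₀ := hf.differentiable two_ne_zero
  have hg₀ := hg.differentiable two_ne_zero
  have hf₁ := (contDiff_pd (m := 1) hf (by norm_num) j).differentiable one_ne_zero
  have hg₁ := (contDiff_pd (m := 1) hg (by norm_num) j).differentiable one_ne_zero
  simp only [hessian, Matrix.of_apply, pd_mul hf₀ hg₀,
    pd_add (hf₁.fun_mul hg₀) (hf₀.fun_mul hg₁), pd_mul hf₁ hg₀, pd_mul hf₀ hg₁]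
  ring

lemma contDiff_comp_inner {h : ℝ → ℝ} {n : WithTop ℕ∞} (hh : ContDiff ℝ n h) (k : E3) :
    ContDiff ℝ n fun x => h ⟪k, x⟫_ℝ :=
  hh.comp (innerSL ℝ k).contDiff

lemma hessian_comp_inner {h h' h'' : ℝ → ℝ} (hh : ∀ t, HasDerivAt h (h' t) t)
    (hh' : ∀ t, HasDerivAt h' (h'' t) t) (k x : E3) :
    hessian (fun y => h ⟪k, y⟫_ℝ) x = h'' ⟪k, x⟫_ℝ • Matrix.vecMulVec k.ofLp k.ofLp := by
  have hd : Differentiable ℝ fun y : E3 => h' ⟪k, y⟫_ℝ := fun y =>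
    ((hh' _).differentiableAt).comp y (innerSL ℝ k).differentiableAt
  ext i j
  simp only [hessian, Matrix.of_apply, pd_comp_inner hh, pd_mul_const hd, pd_comp_inner hh',
    Matrix.smul_apply, Matrix.vecMulVec_apply, smul_eq_mul, mul_assoc]

lemma smul_hessian_mul_cos_add_smul_hessian_mul_sin (hf : ContDiff ℝ 2 f) (k x : E3) :
    (f x * cos ⟪k, x⟫_ℝ) • hessian (fun y => f y * cos ⟪k, y⟫_ℝ) x +
        (f x * sin ⟪k, x⟫_ℝ) • hessian (fun y => f y * sin ⟪k, y⟫_ℝ) x =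
      f x • hessian f x - f x ^ 2 • Matrix.vecMulVec k.ofLp k.ofLp := by
  have hcos : ContDiff ℝ 2 fun y : E3 => cos ⟪k, y⟫_ℝ := contDiff_comp_inner contDiff_cos k
  have hsin : ContDiff ℝ 2 fun y : E3 => sin ⟪k, y⟫_ℝ := contDiff_comp_inner contDiff_sin k
  ext i j
  simp only [Matrix.add_apply, Matrix.sub_apply, Matrix.smul_apply, smul_eq_mul,
    Matrix.vecMulVec_apply, hessian_mul_apply hf hcos, hessian_mul_apply hf hsin,
    pd_comp_inner hasDerivAt_cos, pd_comp_inner hasDerivAt_sin,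
    hessian_comp_inner hasDerivAt_cos fun t => (hasDerivAt_sin t).fun_neg,
    hessian_comp_inner hasDerivAt_sin hasDerivAt_cos]
  linear_combination
    (f x * hessian f x i j - f x ^ 2 * (k i * k j)) * cos_sq_add_sin_sq ⟪k, x⟫_ℝ

end Hessian

section EnergyDensity

/-- The value of `L(f w)`, for a constant vector `w`, at a point where `f` has Hessian `H`. -/
def lameOfHessian (α : ℝ) (w : Fin 3 → ℝ) : Matrix (Fin 3) (Fin 3) ℝ →ₗ[ℝ] Fin 3 → ℝ where
  toFun H := -(H.trace • w) - α • H *ᵥ w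
  map_add' H K := by
    simp only [Matrix.trace_add, Matrix.add_mulVec, add_smul, smul_add]
    abel
  map_smul' c H := by
    simp only [Matrix.trace_smul, Matrix.smul_mulVec, smul_eq_mul, mul_smul, smul_sub, smul_neg,
      smul_comm α c, RingHom.id_apply]

lemma lameOfHessian_neg_vecMulVec (α : ℝ) (k w : Fin 3 → ℝ) :
    lameOfHessian α w (-Matrix.vecMulVec k k) = (k ⬝ᵥ k) • w + (α * (k ⬝ᵥ w)) • k := by
  simp only [lameOfHessian, LinearMap.coe_mk, AddHom.coe_mk, Matrix.trace_neg,
    Matrix.trace_vecMulVec, Matrix.neg_mulVec, Matrix.vecMulVec_mulVec, op_smul_eq_smul, neg_smul,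
    smul_neg, neg_neg, sub_neg_eq_add, smul_smul]

/-- The principal symbol `|k|² w + α (k·w) k` of `L` at the frequency `k`, applied to `w` and paired
with `M w`. -/
def symbolForm (α : ℝ) (k w : Fin 3 → ℝ) (M : Matrix (Fin 3) (Fin 3) ℝ) : ℝ :=
  ((k ⬝ᵥ k) • w + (α * (k ⬝ᵥ w)) • k) ⬝ᵥ M *ᵥ w

lemma symbolForm_smul (α c : ℝ) (k w : Fin 3 → ℝ) (M : Matrix (Fin 3) (Fin 3) ℝ) :
    symbolForm α (c • k) w M = symbolForm α k w M * c ^ 2 := by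
  simp only [symbolForm, smul_dotProduct, dotProduct_smul, add_dotProduct, smul_eq_mul]
  ring

/-- The energy density `(Lu)·(Mu)` with a matrix weight `M`. -/
def energyDensity (α : ℝ) (M : E3 → Matrix (Fin 3) (Fin 3) ℝ) (u : E3 → Fin 3 → ℝ) (x : E3) : ℝ :=
  ∑ i, ∑ j, lame α u x i * M x i j * u x j

variable {α : ℝ} {f : E3 → ℝ}

lemma lame_mul_const (hf : ContDiff ℝ 2 f) (w : Fin 3 → ℝ) (x : E3) :
    lame α (fun y i => f y * w i) x = lameOfHessian α w (hessian f x) := by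
  have hf₀ := hf.differentiable two_ne_zero
  have hf₁ (k) := (contDiff_pd (m := 1) hf (by norm_num) k).differentiable one_ne_zero
  have hdiv : divg (fun y i => f y * w i) = fun y => ∑ k, pd k f y * w k := by
    funext y
    simp only [divg, pd_mul_const hf₀]
  funext i
  simp only [lame, lap, hdiv, pd_sum fun k _ => (hf₁ k).mul_const (w k), pd_mul_const hf₀,
    pd_mul_const (hf₁ _), lameOfHessian, LinearMap.coe_mk, AddHom.coe_mk, Pi.sub_apply,
    Pi.neg_apply, Pi.smul_apply, smul_eq_mul, Matrix.trace, Matrix.diag_apply, Matrix.mulVec,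
    dotProduct, hessian, Matrix.of_apply, Finset.sum_mul]

lemma energyDensity_mul_const (hf : ContDiff ℝ 2 f) (M : E3 → Matrix (Fin 3) (Fin 3) ℝ)
    (w : Fin 3 → ℝ) (x : E3) :
    energyDensity α M (fun y i => f y * w i) x =
      lameOfHessian α w (f x • hessian f x) ⬝ᵥ M x *ᵥ w := by
  simp only [energyDensity, lame_mul_const hf, map_smul, dotProduct, Matrix.mulVec, Pi.smul_apply,
    smul_eq_mul, Finset.mul_sum]
  exact Finset.sum_congr rfl fun i _ => Finset.sum_congr rfl fun j _ => by ring

lemma energyDensity_cos_add_energyDensity_sin (hf : ContDiff ℝ 2 f)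
    (M : E3 → Matrix (Fin 3) (Fin 3) ℝ) (k : E3) (w : Fin 3 → ℝ) (x : E3) :
    energyDensity α M (fun y i => f y * cos ⟪k, y⟫_ℝ * w i) x +
        energyDensity α M (fun y i => f y * sin ⟪k, y⟫_ℝ * w i) x =
      energyDensity α M (fun y i => f y * w i) x +
        f x ^ 2 * symbolForm α k.ofLp w (M x) := by
  have hcos : ContDiff ℝ 2 fun y => f y * cos ⟪k, y⟫_ℝ :=
    hf.mul (contDiff_comp_inner contDiff_cos k)
  have hsin : ContDiff ℝ 2 fun y => f y * sin ⟪k, y⟫_ℝ :=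
    hf.mul (contDiff_comp_inner contDiff_sin k)
  rw [energyDensity_mul_const hcos, energyDensity_mul_const hsin, energyDensity_mul_const hf,
    ← add_dotProduct, ← map_add, smul_hessian_mul_cos_add_smul_hessian_mul_sin hf, sub_eq_add_neg,
    ← smul_neg, map_add, map_smul _ (f x ^ 2), add_dotProduct, smul_dotProduct, smul_eq_mul,
    lameOfHessian_neg_vecMulVec, symbolForm]

end EnergyDensity

section ScalarTestFunctions

variable {E : Type*} [NormedAddCommGroup E] [NormedSpace ℝ E] {U : Set E} {f g : E → ℝ}

/-- Scalar test functions, `f ∈ C₀^∞(U)`; the vector-valued counterpart is `IsTestOn`. -/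
structure IsScalarTestOn (U : Set E) (f : E → ℝ) : Prop where
  contDiff : ContDiff ℝ ∞ f
  hasCompactSupport : HasCompactSupport f
  tsupport_subset : tsupport f ⊆ U

lemma IsScalarTestOn.mul_contDiff (hf : IsScalarTestOn U f) (hg : ContDiff ℝ ∞ g) :
    IsScalarTestOn U fun x => f x * g x where
  contDiff := hf.contDiff.mul hg
  hasCompactSupport := hf.hasCompactSupport.mul_right
  tsupport_subset := tsupport_mul_subset_left.trans hf.tsupport_subset

lemma IsScalarTestOn.sq (hf : IsScalarTestOn U f) : IsScalarTestOn U fun x => f x ^ 2 := by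
  simpa only [pow_two] using hf.mul_contDiff hf.contDiff

lemma IsScalarTestOn.continuous_mul (hU : IsOpen U) (hf : IsScalarTestOn U f)
    (hg : ContinuousOn g U) : Continuous fun x => f x * g x :=
  (hf.contDiff.continuous.continuousOn.mul hg).continuous_of_tsupport_subset hU
    (tsupport_mul_subset_left.trans hf.tsupport_subset)

lemma IsScalarTestOn.integrable_mul [MeasurableSpace E] [BorelSpace E] {μ : Measure E}
    [IsFiniteMeasureOnCompacts μ] (hU : IsOpen U) (hf : IsScalarTestOn U f)
    (hg : ContinuousOn g U) : Integrable (fun x => f x * g x) μ :=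
  (hf.continuous_mul hU hg).integrable_of_hasCompactSupport hf.hasCompactSupport.mul_right

lemma exists_isScalarTestOn_integral_sq_mul_neg [FiniteDimensional ℝ E] [MeasurableSpace E]
    [BorelSpace E] {μ : Measure E} [IsFiniteMeasureOnCompacts μ] [μ.IsOpenPosMeasure]
    (hU : IsOpen U) (hg : ContinuousOn g U) {p : E} (hp : p ∈ U) (hgp : g p < 0) :
    ∃ φ, IsScalarTestOn U φ ∧ ∫ x, φ x ^ 2 * g x ∂μ < 0 := by
  have hnhds : U ∩ {x | g x < 0} ∈ 𝓝 p :=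
    inter_mem (hU.mem_nhds hp) ((hg.continuousAt (hU.mem_nhds hp)).eventually_lt_const hgp)
  obtain ⟨φ, hφ_subset, hφ_supp, hφ_smooth, -, hφp⟩ :=
    exists_contDiff_tsupport_subset (n := ⊤) hnhds
  have hφ : IsScalarTestOn U φ :=
    ⟨hφ_smooth, hφ_supp, hφ_subset.trans Set.inter_subset_left⟩
  have hcont : Continuous fun x => -(φ x ^ 2 * g x) := (hφ.sq.continuous_mul hU hg).neg
  have hsupp : HasCompactSupport fun x => -(φ x ^ 2 * g x) :=
    hφ.sq.hasCompactSupport.mul_right.neg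
  have hnonneg (x) : 0 ≤ -(φ x ^ 2 * g x) := by
    by_cases hx : x ∈ tsupport φ
    · have hgx : g x < 0 := (hφ_subset hx).2
      exact neg_nonneg.2 (mul_nonpos_of_nonneg_of_nonpos (sq_nonneg _) hgx.le)
    · simp [image_eq_zero_of_notMem_tsupport hx]
  have hpos : 0 < ∫ x, -(φ x ^ 2 * g x) ∂μ :=
    hcont.integral_pos_of_hasCompactSupport_nonneg_nonzero hsupp hnonneg (x := p)
      (by simp [hφp, hgp.ne])
  exact ⟨φ, hφ, by simpa only [integral_neg, neg_pos] using hpos⟩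

end ScalarTestFunctions

section Oscillation

variable {α : ℝ} {U : Set E3} {M : E3 → Matrix (Fin 3) (Fin 3) ℝ} {f : E3 → ℝ}

lemma IsScalarTestOn.isTestOn_mul_const (hf : IsScalarTestOn U f) (w : Fin 3 → ℝ) :
    IsTestOn U fun y i => f y * w i := by
  have hsupp : Function.support (fun y i => f y * w i) ⊆ Function.support f := fun y hy hfy =>
    hy (by simp [funext_iff, hfy])
  exact ⟨contDiff_pi.2 fun i => hf.contDiff.mul contDiff_const, hf.hasCompactSupport.mono hsupp,
    (closure_mono hsupp).trans hf.tsupport_subset⟩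

lemma continuousOn_lameOfHessian_dotProduct (hM : ContinuousOn M U) (w : Fin 3 → ℝ)
    {H : E3 → Matrix (Fin 3) (Fin 3) ℝ} (hH : Continuous H) :
    ContinuousOn (fun x => lameOfHessian α w (H x) ⬝ᵥ M x *ᵥ w) U := by
  have hL : Continuous (lameOfHessian α w) := LinearMap.continuous_of_finiteDimensional _
  exact continuousOn_iff_continuous_domRestrict.2
    ((hL.comp (hH.comp continuous_subtype_val)).dotProduct
      (hM.domRestrict.matrix_mulVec continuous_const))

lemma continuousOn_symbolForm (hM : ContinuousOn M U) (k w : Fin 3 → ℝ) :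
    ContinuousOn (fun x => symbolForm α k w (M x)) U := by
  simp only [symbolForm, ← lameOfHessian_neg_vecMulVec]
  exact continuousOn_lameOfHessian_dotProduct hM w continuous_const

lemma IsScalarTestOn.integrable_energyDensity (hU : IsOpen U) (hM : ContinuousOn M U)
    (hf : IsScalarTestOn U f) (w : Fin 3 → ℝ) :
    Integrable (energyDensity α M fun y i => f y * w i) := by
  have hf₂ : ContDiff ℝ 2 f := hf.contDiff.of_le (by norm_cast)
  have hden : (energyDensity α M fun y i => f y * w i) =
      fun x => f x * (lameOfHessian α w (hessian f x) ⬝ᵥ M x *ᵥ w) := by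
    funext x
    rw [energyDensity_mul_const hf₂, map_smul, smul_dotProduct, smul_eq_mul]
  rw [hden]
  exact hf.integrable_mul hU (continuousOn_lameOfHessian_dotProduct hM w (continuous_hessian hf₂))

lemma integral_energyDensity_cos_add_integral_energyDensity_sin (hU : IsOpen U)
    (hM : ContinuousOn M U) (hf : IsScalarTestOn U f) (k : E3) (w : Fin 3 → ℝ) :
    (∫ x, energyDensity α M (fun y i => f y * cos ⟪k, y⟫_ℝ * w i) x) +
        ∫ x, energyDensity α M (fun y i => f y * sin ⟪k, y⟫_ℝ * w i) x =
      (∫ x, energyDensity α M (fun y i => f y * w i) x) +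
        ∫ x, f x ^ 2 * symbolForm α k.ofLp w (M x) := by
  have hcos := hf.mul_contDiff (contDiff_comp_inner contDiff_cos k)
  have hsin := hf.mul_contDiff (contDiff_comp_inner contDiff_sin k)
  rw [← integral_add (hcos.integrable_energyDensity hU hM w)
      (hsin.integrable_energyDensity hU hM w),
    ← integral_add (hf.integrable_energyDensity hU hM w)
      (hf.sq.integrable_mul hU (continuousOn_symbolForm hM k.ofLp w))]
  exact integral_congr_ae (.of_forall fun x => energyDensity_cos_add_energyDensity_sin
    (hf.contDiff.of_le (by norm_cast)) M k w x)

theorem exists_isTestOn_integral_energyDensity_neg (hU : IsOpen U) (hM : ContinuousOn M U)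
    {p : E3} (hp : p ∈ U) {k : E3} {w : Fin 3 → ℝ}
    (hneg : symbolForm α k.ofLp w (M p) < 0) :
    ∃ u, IsTestOn U u ∧ ∫ x, energyDensity α M u x < 0 := by
  obtain ⟨φ, hφ, hJ⟩ := exists_isScalarTestOn_integral_sq_mul_neg (μ := volume) hU
    (continuousOn_symbolForm hM k.ofLp w) hp hneg
  obtain ⟨N, hN⟩ : ∃ N : ℝ, (∫ x, energyDensity α M (fun y i => φ y * w i) x) +
      (∫ x, φ x ^ 2 * symbolForm α k.ofLp w (M x)) * N ^ 2 < 0 :=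
    ((tendsto_atBot_add_const_left atTop _ ((tendsto_pow_atTop two_ne_zero).const_mul_atTop_of_neg
      hJ)).eventually_lt_atBot 0).exists
  have hsum := integral_energyDensity_cos_add_integral_energyDensity_sin (α := α) hU hM hφ (N • k) w
  simp only [WithLp.ofLp_smul, symbolForm_smul, ← mul_assoc, integral_mul_const] at hsum
  rw [← hsum] at hN
  by_contra! hnonneg
  have hcos := hnonneg _
    ((hφ.mul_contDiff (contDiff_comp_inner contDiff_cos (N • k))).isTestOn_mul_const w)
  have hsin := hnonneg _
    ((hφ.mul_contDiff (contDiff_comp_inner contDiff_sin (N • k))).isTestOn_mul_const w)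
  linarith

end Oscillation

section FundamentalMatrix

variable {α : ℝ}

lemma continuousOn_Phi (α : ℝ) : ContinuousOn (Phi α) {(0 : E3)}ᶜ := by
  have hnorm : ∀ x ∈ ({(0 : E3)}ᶜ : Set E3), ‖x‖ ≠ 0 := fun x hx => norm_ne_zero_iff.2 hx
  have hnorm_sq : ∀ x ∈ ({(0 : E3)}ᶜ : Set E3), ‖x‖ ^ 2 ≠ 0 := fun x hx =>
    pow_ne_zero 2 (hnorm x hx)
  unfold Phi
  fun_prop (disch := assumption)

lemma Phi_single_zero (h₂ : α ≠ -2) :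
    (Phi α (EuclideanSpace.single 0 1) : Matrix (Fin 3) (Fin 3) ℝ) =
      cA α • Matrix.diagonal ![2 * (α + 1) / (α + 2), 1, 1] := by
  have hdiag : 1 + α / (α + 2) = 2 * (α + 1) / (α + 2) := by
    have hα₂ : α + 2 ≠ 0 := fun h => h₂ (by linarith)
    field_simp
    ring
  ext i j
  fin_cases i <;> fin_cases j <;> simp [Phi, hdiag]

lemma symbolForm_Phi_single_zero (h₁ : α ≠ -1) (h₂ : α ≠ -2) (t : ℝ) :
    symbolForm α ![1, 1, 0] ![1, t, 0] (Phi α (EuclideanSpace.single 0 1)) =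
      (8 * π * (α + 1))⁻¹ *
        ((α + 2) ^ 2 * (t * t) + α * (3 * α + 4) * t + 2 * (α + 1) * (α + 2)) := by
  have hα₁ : α + 1 ≠ 0 := fun h => h₁ (by linarith)
  have hα₂ : α + 2 ≠ 0 := fun h => h₂ (by linarith)
  rw [Phi_single_zero h₂, symbolForm, cA, Matrix.smul_mulVec, dotProduct_smul]
  simp only [dotProduct, Fin.sum_univ_three, Matrix.cons_val_zero, mul_one, Matrix.cons_val_one,
    Matrix.cons_val, mul_zero, add_zero, Pi.smul_apply, smul_eq_mul, Pi.add_apply,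
    Matrix.mulVec_diagonal]
  field_simp
  ring

lemma exists_symbolForm_Phi_neg (h₁ : α ≠ -1) (h₂ : α ≠ -2)
    (h : 32 * (α + 1) ^ 2 * (α + 2) < α ^ 4) :
    ∃ w, symbolForm α ![1, 1, 0] w (Phi α (EuclideanSpace.single 0 1)) < 0 := by
  by_contra! hnonneg
  set γ := (8 * π * (α + 1))⁻¹
  have hγ_pos : 0 < γ ^ 2 := by
    have hα₁ : α + 1 ≠ 0 := fun h => h₁ (by linarith)
    positivity
  have hdiscrim : discrim (γ * (α + 2) ^ 2) (γ * (α * (3 * α + 4)))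
      (γ * (2 * (α + 1) * (α + 2))) ≤ 0 := discrim_le_zero fun t => by
    have ht := hnonneg ![1, t, 0]
    rw [symbolForm_Phi_single_zero h₁ h₂] at ht
    linarith
  have hdiscrim_eq : discrim (γ * (α + 2) ^ 2) (γ * (α * (3 * α + 4)))
      (γ * (2 * (α + 1) * (α + 2))) = γ ^ 2 * (α ^ 4 - 32 * (α + 1) ^ 2 * (α + 2)) := by
    rw [discrim]
    ring
  rw [hdiscrim_eq] at hdiscrim
  exact hdiscrim.not_gt (mul_pos hγ_pos (sub_pos.2 h))

end FundamentalMatrix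

theorem lame_not_weighted_positive_definite_general
    (α : ℝ) (h₁ : α ≠ -1) (h₂ : α ≠ -2) (h : 32 * (α + 1) ^ 2 * (α + 2) < α ^ 4) :
    ∃ u : E3 → Fin 3 → ℝ, IsTestOn ({(0 : E3)}ᶜ) u ∧
      (∫ x : E3, ∑ i, ∑ j, lame α u x i * Phi α x i j * u x j) < 0 := by
  obtain ⟨w, hw⟩ := exists_symbolForm_Phi_neg h₁ h₂ h
  exact exists_isTestOn_integral_energyDensity_neg isOpen_compl_singleton (continuousOn_Phi α)
    (by simp : EuclideanSpace.single 0 1 ∈ ({(0 : E3)}ᶜ : Set E3)) (k := !₂[1, 1, 0]) hw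

/-- If `(α+1)(3α+4)² - α⁴/4 < 0` then the 3D Lamé system is not positive
definite with weight `Φ`. -/
theorem lame_not_weighted_positive_definite
    (α : ℝ) (hα : -1 < α)
    (h : (α + 1) * (3 * α + 4) ^ 2 - α ^ 4 / 4 < 0) :
    ∃ u : E3 → Fin 3 → ℝ, IsTestOn ({(0 : E3)}ᶜ) u ∧
      (∫ x : E3, ∑ i, ∑ j, lame α u x i * Phi α x i j * u x j) < 0 := by
  exact lame_not_weighted_positive_definite_general α (by linarith) (by linarith)
    (by nlinarith [mul_nonneg (sq_nonneg α) (by linarith : 0 ≤ α + 1)])
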